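/- Let G = ℤ/2 × ℤ/2 and let s : G → ℤ/2 be the projection onto the second factor. Define α : G × G × G → ℂˣ by α((a₁, s₁), (a₂, s₂), (a₃, s₃)) = (-1)^(s₁' * s₂' * a₃'), where x' ∈ {0, 1} denotes the integer representative of x ∈ ℤ/2. Then α is a twisted 3-cocycle on G with respect to s, and α is not a twisted 3-coboundary. (This is the nontrivial mixed 't Hooft anomaly of ℤ₂ × ℤ₂ᵀ appearing in the paper's Morita equivalence between Vec_{ℤ₄ᵀ} and Vec^α_{ℤ₂×ℤ₂ᵀ}: the ℤ₂-domain wall carries a Kramers doublet.) -/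

import Mathlib

noncomputable section

/-- Complex conjugation on the group of units `ℂˣ`. -/
def conjUnits : ℂˣ →* ℂˣ := Units.map (starRingEnd ℂ).toMonoidHom

/-- The group `G = ℤ/2 × ℤ/2` (written additively). -/
abbrev G := ZMod 2 × ZMod 2

/-- The grading homomorphism `s : G → ℤ/2`, projection onto the second factor. -/
def s : G → ZMod 2 := fun g => g.2

/-- The twisted action of `g ∈ G` on `ℂˣ`: trivial if `s g = 0`, complex conjugation
otherwise. -/
def tAct (g : G) (z : ℂˣ) : ℂˣ := if s g = 0 then z else conjUnits z

/-- Twisted 3-cocycle condition on `G` with respect to `s`. -/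
def IsTwisted3Cocycle (ω : G → G → G → ℂˣ) : Prop :=
  ∀ g₁ g₂ g₃ g₄,
    tAct g₁ (ω g₂ g₃ g₄) * ω g₁ (g₂ + g₃) g₄ * ω g₁ g₂ g₃ =
      ω (g₁ + g₂) g₃ g₄ * ω g₁ g₂ (g₃ + g₄)

/-- Twisted 3-coboundary condition on `G` with respect to `s`. -/
def IsTwisted3Coboundary (ω : G → G → G → ℂˣ) : Prop :=
  ∃ β : G → G → ℂˣ, ∀ g₁ g₂ g₃,
    ω g₁ g₂ g₃ = tAct g₁ (β g₂ g₃) * (β (g₁ + g₂) g₃)⁻¹ * β g₁ (g₂ + g₃) * (β g₁ g₂)⁻¹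

/-- The mixed anomaly cocycle `α((a₁,s₁),(a₂,s₂),(a₃,s₃)) = (-1)^(s₁ s₂ a₃)` of
`ℤ₂ × ℤ₂ᵀ`. -/
def α : G → G → G → ℂˣ := fun g₁ g₂ g₃ =>
  (-1 : ℂˣ) ^ (g₁.2.val * g₂.2.val * g₃.1.val)

/-!
Write `x = (1, 0)` for the unitary generator and `t = (0, 1)` for the antiunitary one. The slant
product along `x` turns a 3-cochain `ω` into the 2-cochain
`(g, h) ↦ ω(x, g, h) ω(g, x, h)⁻¹ ω(g, h, x)`, and since `x` is central and acts trivially it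
carries coboundaries to coboundaries. A 2-coboundary `δγ` normalized at the identity satisfies
`δγ(t, t) = conj(γ t) γ t = |γ t|² > 0`, whereas the slant product of `α` takes the value `-1`
at `(t, t)`: the domain wall of `x` carries a Kramers doublet `T² = -1`. That `α` is a cocycle
expresses the trilinearity of its exponent over `ℤ/2`.
-/

section SlantProduct

variable {Γ M : Type*} [CommGroup M]

/-- The differential from 1-cochains to 2-cochains of an additive `Γ` with coefficients in the
multiplicative group `M`, with the action encoded as a family `φ` of endomorphisms of `M`. -/
def mulD₁₂ [Add Γ] (φ : Γ → M →* M) (γ : Γ → M) (g h : Γ) : M :=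
  φ g (γ h) * (γ (g + h))⁻¹ * γ g

/-- The differential from 2-cochains to 3-cochains, in the conventions of `mulD₁₂`. -/
def mulD₂₃ [Add Γ] (φ : Γ → M →* M) (β : Γ → Γ → M) (g₁ g₂ g₃ : Γ) : M :=
  φ g₁ (β g₂ g₃) * (β (g₁ + g₂) g₃)⁻¹ * β g₁ (g₂ + g₃) * (β g₁ g₂)⁻¹

/-- The slant product `i_x β` of a 2-cochain along `x`. -/
def slant₂ (x : Γ) (β : Γ → Γ → M) (g : Γ) : M :=
  β x g * (β g x)⁻¹

/-- The slant product `i_x ω` of a 3-cochain along `x`. -/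
def slant₃ (x : Γ) (ω : Γ → Γ → Γ → M) (g h : Γ) : M :=
  ω x g h * (ω g x h)⁻¹ * ω g h x

theorem slant₃_mulD₂₃ [AddCommMagma Γ] {φ : Γ → M →* M} {x : Γ} (hx : φ x = MonoidHom.id M)
    (β : Γ → Γ → M) (g h : Γ) :
    slant₃ x (mulD₂₃ φ β) g h = (mulD₁₂ φ (slant₂ x β) g h)⁻¹ := by
  simp only [slant₃, mulD₂₃, mulD₁₂, slant₂, hx, MonoidHom.id_apply, map_mul, map_inv,
    add_comm g x, add_comm h x]
  apply Additive.ofMul.injective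
  simp only [ofMul_mul, ofMul_inv]
  abel

theorem mulD₁₂_self_of_add_self_eq_zero [AddZeroClass Γ] {φ : Γ → M →* M}
    (hφ : φ 0 = MonoidHom.id M) {γ : Γ → M} (hγ : mulD₁₂ φ γ 0 0 = 1) {t : Γ} (ht : t + t = 0) :
    mulD₁₂ φ γ t t = φ t (γ t) * γ t := by
  have hγ₀ : γ 0 = 1 := by simpa [mulD₁₂, hφ] using hγ
  simp [mulD₁₂, ht, hγ₀]

end SlantProduct

theorem conjUnits_mul_self_ne_neg_one (z : ℂˣ) : conjUnits z * z ≠ -1 := by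
  intro h
  have hC : starRingEnd ℂ (z : ℂ) * z = -1 := congrArg Units.val h
  have hR : Complex.normSq z = -1 := by
    rw [← Complex.normSq_eq_conj_mul_self] at hC
    exact_mod_cast hC
  linarith [Complex.normSq_nonneg z]

/-- The twisted action `tAct` as a family of endomorphisms of `ℂˣ`. -/
def tActHom (g : G) : ℂˣ →* ℂˣ := if s g = 0 then MonoidHom.id ℂˣ else conjUnits

theorem tActHom_apply (g : G) (z : ℂˣ) : tActHom g z = tAct g z := by
  unfold tActHom tAct
  split_ifs <;> rfl

theorem tActHom_of_s_eq_zero {g : G} (hg : s g = 0) : tActHom g = MonoidHom.id ℂˣ :=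
  if_pos hg

theorem tActHom_of_s_ne_zero {g : G} (hg : s g ≠ 0) : tActHom g = conjUnits :=
  if_neg hg

theorem IsTwisted3Coboundary.exists_eq_mulD₂₃ {ω : G → G → G → ℂˣ}
    (hω : IsTwisted3Coboundary ω) : ∃ β, ω = mulD₂₃ tActHom β := by
  obtain ⟨β, hβ⟩ := hω
  refine ⟨β, ?_⟩
  funext g₁ g₂ g₃
  rw [hβ, mulD₂₃, tActHom_apply]

theorem IsTwisted3Coboundary.slant₃_self_ne_neg_one {ω : G → G → G → ℂˣ}
    (hω : IsTwisted3Coboundary ω) {x t : G} (hx : s x = 0) (ht : s t ≠ 0)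
    (h₀ : slant₃ x ω 0 0 = 1) : slant₃ x ω t t ≠ -1 := by
  obtain ⟨β, rfl⟩ := hω.exists_eq_mulD₂₃
  have hslant := slant₃_mulD₂₃ (tActHom_of_s_eq_zero hx) β
  have hnormalized : mulD₁₂ tActHom (slant₂ x β) 0 0 = 1 := by
    rw [← inv_eq_one, ← hslant, h₀]
  rw [hslant, mulD₁₂_self_of_add_self_eq_zero (tActHom_of_s_eq_zero rfl) hnormalized
    (CharTwo.add_self_eq_zero t), tActHom_of_s_ne_zero ht, Ne, inv_eq_iff_eq_inv, inv_neg, inv_one]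
  exact conjUnits_mul_self_ne_neg_one _

theorem tAct_map_intCast (g : G) (u : ℤˣ) :
    tAct g (Units.map (Int.castRingHom ℂ).toMonoidHom u) =
      Units.map (Int.castRingHom ℂ).toMonoidHom u := by
  unfold tAct
  split_ifs
  · rfl
  · ext
    simp [conjUnits]

theorem α_eq_map_uzpow (g₁ g₂ g₃ : G) :
    α g₁ g₂ g₃ =
      Units.map (Int.castRingHom ℂ).toMonoidHom ((-1 : ℤˣ) ^ (g₁.2 * g₂.2 * g₃.1)) := by
  have hexp : g₁.2 * g₂.2 * g₃.1 = ((g₁.2.val * g₂.2.val * g₃.1.val : ℕ) : ZMod 2) := by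
    simp
  rw [hexp, uzpow_natCast, map_pow, α]
  congr 1
  ext
  simp

theorem isTwisted3Cocycle_α : IsTwisted3Cocycle α := by
  intro g₁ g₂ g₃ g₄
  simp only [α_eq_map_uzpow, tAct_map_intCast, ← map_mul, ← uzpow_add, Prod.fst_add, Prod.snd_add]
  congr 2
  ring

theorem slant₃_α_zero (x : G) : slant₃ x α 0 0 = 1 := by
  simp [slant₃, α]

theorem slant₃_α_eq_neg_one : slant₃ (1, 0) α (0, 1) (0, 1) = -1 := by
  simp [slant₃, α, ZMod.val_one]

/-- The mixed 't Hooft anomaly of `ℤ₂ × ℤ₂ᵀ`: `α` is a twisted 3-cocycle with respect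
to `s`, and it is not a twisted 3-coboundary. -/
theorem anomaly_cocycle_nontrivial :
    IsTwisted3Cocycle α ∧ ¬ IsTwisted3Coboundary α := by
  refine ⟨isTwisted3Cocycle_α, fun hα => ?_⟩
  have hx : s (1, 0) = 0 := rfl
  have ht : s (0, 1) ≠ 0 := one_ne_zero
  exact hα.slant₃_self_ne_neg_one hx ht (slant₃_α_zero _) slant₃_α_eq_neg_one

end
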